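/- Let $n, \tilde{n}, r, \tilde{r}, d, p$ be natural numbers with $r, \tilde{r} \ge 1$, $n - r = \tilde{n} - \tilde{r} = d$ and $p \le \min\{r, \tilde{r}\}$. Then there exists a bijection $\Phi$ between $\mathcal{S}_{\le p}(n,r)$ and $\mathcal{S}_{\le p}(\tilde{n},\tilde{r})$ such that for all $\sigma, \sigma' \in \mathcal{S}_{\le p}(n,r)$ one has $\sigma \preceq \sigma'$ if and only if $\Phi(\sigma) \preceq \Phi(\sigma')$. -/

import Mathlib

/-! Common definitions: signotopes and co-signotopes on `[n] = {1, …, n}` (encoded as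
`Finset.Icc 1 n` in `ℕ`), sign functions are `Finset ℕ → Bool` (`true` = `+`, `false` = `-`)
that vanish (are `-`) away from the relevant subsets. -/

open Classical in
/-- The sign function with `+`-set `S` (and `-` elsewhere). -/
noncomputable def ofPlusSet (S : Set (Finset ℕ)) : Finset ℕ → Bool :=
  fun A => if A ∈ S then true else false

/-- Number of sign changes in a list of signs. -/
def signChanges (l : List Bool) : ℕ :=
  ((l.zip l.tail).filter fun p => p.1 ≠ p.2).length

/-- Number of `+`-subsets of a sign function. -/
noncomputable def plusCount (τ : Finset ℕ → Bool) : ℕ :=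
  {A : Finset ℕ | τ A = true}.ncard

/-- The series of signs `τ (C ∪ {x})` for `x ∈ [n] \ C` in increasing order.
For a `d`-subset `B` with `i`-th smallest element `b`, `series n τ (B.erase b)` is
the `(τ,B,i)`-series. -/
def series (n : ℕ) (τ : Finset ℕ → Bool) (C : Finset ℕ) : List Bool :=
  ((Finset.Icc 1 n \ C).sort (· ≤ ·)).map fun x => τ (insert x C)

/-- An `r`-signotope on `[n]`, encoded as a sign function on all of `Finset ℕ`
which is `-` away from the `r`-subsets of `[n]`. -/
def IsSignotope (n r : ℕ) (σ : Finset ℕ → Bool) : Prop :=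
  (∀ A, σ A = true → A ⊆ Finset.Icc 1 n ∧ A.card = r) ∧
  ∀ X : Finset ℕ, X ⊆ Finset.Icc 1 n → X.card = r + 1 →
    signChanges ((X.sort (· ≤ ·)).map fun x => σ (X.erase x)) ≤ 1

/-- A `d`-co-signotope on `[n]`: every `(τ,B,i)`-series has at most one sign change. -/
def IsCoSignotope (n d : ℕ) (τ : Finset ℕ → Bool) : Prop :=
  (∀ A, τ A = true → A ⊆ Finset.Icc 1 n ∧ A.card = d) ∧
  ∀ B : Finset ℕ, B ⊆ Finset.Icc 1 n → B.card = d → ∀ b ∈ B,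
    signChanges (series n τ (B.erase b)) ≤ 1

/-- `𝒮_p(n,r)`: `r`-signotopes on `[n]` with exactly `p` `+`-signs. -/
noncomputable def sigSet (n r p : ℕ) : Set (Finset ℕ → Bool) :=
  {σ | IsSignotope n r σ ∧ plusCount σ = p}

/-- `𝒮_{≤p}(n,r)`. -/
noncomputable def sigSetLe (n r p : ℕ) : Set (Finset ℕ → Bool) :=
  {σ | IsSignotope n r σ ∧ plusCount σ ≤ p}

/-- `𝒮̄_p(n,d)`: `d`-co-signotopes on `[n]` with exactly `p` `+`-subsets. -/
noncomputable def coSigSet (n d p : ℕ) : Set (Finset ℕ → Bool) :=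
  {τ | IsCoSignotope n d τ ∧ plusCount τ = p}

/-- `𝒮̄_{≤p}(n,d)`. -/
noncomputable def coSigSetLe (n d p : ℕ) : Set (Finset ℕ → Bool) :=
  {τ | IsCoSignotope n d τ ∧ plusCount τ ≤ p}

/-- `σ` and `τ` differ by a single step: `σ⁻¹(+) ⊊ τ⁻¹(+)` and `|τ⁻¹(+)| = |σ⁻¹(+)| + 1`. -/
noncomputable def SingleStep (σ τ : Finset ℕ → Bool) : Prop :=
  {A | σ A = true} ⊂ {A | τ A = true} ∧ plusCount τ = plusCount σ + 1

/-- The higher Bruhat order on `r`-signotopes on `[n]`: reflexive-transitive closure of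
the single step relation. -/
noncomputable def BruhatLe (n r : ℕ) (σ τ : Finset ℕ → Bool) : Prop :=
  Relation.ReflTransGen (fun a b => IsSignotope n r a ∧ IsSignotope n r b ∧ SingleStep a b) σ τ

/-- The complementary higher Bruhat order on `d`-co-signotopes on `[n]`. -/
noncomputable def CoBruhatLe (n d : ℕ) (σ τ : Finset ℕ → Bool) : Prop :=
  Relation.ReflTransGen (fun a b => IsCoSignotope n d a ∧ IsCoSignotope n d b ∧ SingleStep a b) σ τ

/-- Adjacency in the graph `G_{n,d}`: `B' = (B \ {x}) ∪ {y}` with no element of `B \ {x}`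
strictly between `x` and `y`. -/
def GAdj (n d : ℕ) (B B' : Finset ℕ) : Prop :=
  B ⊆ Finset.Icc 1 n ∧ B.card = d ∧ B' ⊆ Finset.Icc 1 n ∧ B'.card = d ∧
  ∃ x ∈ B, ∃ y ∈ Finset.Icc 1 n, y ∉ B ∧ B' = insert y (B.erase x) ∧
    ∀ z ∈ B.erase x, ¬(min x y < z ∧ z < max x y)

/-- The source subset `S_{n,d,i} = {1,…,i} ∪ {n-d+i+1,…,n}`. -/
def sourceSubset (n d i : ℕ) : Finset ℕ :=
  Finset.Icc 1 i ∪ Finset.Icc (n - d + i + 1) n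

/-- Connectivity inside the `+`-subsets of `τ` (the induced subgraph `G_{n,d}[τ]`). -/
def plusConn (n d : ℕ) (τ : Finset ℕ → Bool) : Finset ℕ → Finset ℕ → Prop :=
  Relation.ReflTransGen fun A A' => τ A = true ∧ τ A' = true ∧ GAdj n d A A'

/-- The vertex set `𝒞^τ_i` of the `+`-component of `τ` containing `S_{n,d,i}`
(empty if `S_{n,d,i}` is not a `+`-subset). -/
def comp (n d : ℕ) (τ : Finset ℕ → Bool) (i : ℕ) : Set (Finset ℕ) :=
  {B | τ (sourceSubset n d i) = true ∧ τ B = true ∧ plusConn n d τ (sourceSubset n d i) B}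

/-- The `j`-th smallest element (1-based) of a finite set of naturals. -/
def nthElt (B : Finset ℕ) (j : ℕ) : ℕ := (B.sort (· ≤ ·)).getD (j - 1) 0

/-- `b_j` with the conventions `b_0 = 0` and `b_{d+1} = n+1` (as an integer). -/
def extNth (n d : ℕ) (B : Finset ℕ) (j : ℕ) : ℤ :=
  if j = 0 then 0 else if j ≤ d then (nthElt B j : ℤ) else (n : ℤ) + 1

/-- A series is left-aligned if it starts with `+` and ends with `-`. -/
def LeftAligned (l : List Bool) : Prop :=
  l.head? = some true ∧ l.getLast? = some false

/-- A series is right-aligned if it starts with `-` and ends with `+`. -/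
def RightAligned (l : List Bool) : Prop :=
  l.head? = some false ∧ l.getLast? = some true

/-- `𝒮̄_{p,i}(n,d)`: co-signotopes in `𝒮̄_p(n,d)` whose only nonempty `+`-component
is `𝒞^τ_i` (i.e. every `+`-subset lies in `𝒞^τ_i`). -/
noncomputable def coSigOnly (n d p i : ℕ) : Set (Finset ℕ → Bool) :=
  {τ | IsCoSignotope n d τ ∧ plusCount τ = p ∧ ∀ B, τ B = true → B ∈ comp n d τ i}

/-- `Z(d,i)`: points `(a_1,…,a_d) ∈ ℤ_{>0}^d` (0-indexed in Lean) with `a_j ≥ a_{j-1}`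
for `j ∈ [2,i]` and `a_j ≥ a_{j+1}` for `j ∈ [i+1,d-1]` (1-based indices). -/
def ZSet (d i : ℕ) : Set (Fin d → ℤ) :=
  {a | (∀ j, 0 < a j) ∧
    (∀ j k : Fin d, (j : ℕ) + 1 = (k : ℕ) → (k : ℕ) + 1 ≤ i → a j ≤ a k) ∧
    (∀ j k : Fin d, (j : ℕ) + 1 = (k : ℕ) → i ≤ (j : ℕ) → a k ≤ a j)}

/-- A `(d,i)`-Ferrers diagram with respect to `p`. -/
def IsFerrers (d i p : ℕ) (F : Set (Fin d → ℤ)) : Prop :=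
  F ⊆ ZSet d i ∧ F.ncard = p ∧
  ∀ a ∈ F, ∀ a' ∈ ZSet d i, (∀ j, a' j ≤ a j) → a' ∈ F

/-- The number of `(d,i)`-Ferrers diagrams with respect to `p`. -/
noncomputable def ferrersCount (d i p : ℕ) : ℕ :=
  {F : Set (Fin d → ℤ) | IsFerrers d i p F}.ncard

/-- `f_{n,d,i,j}` (here `j` is the 1-based coordinate index). -/
def fFun (n d i j : ℕ) (x : ℕ) : ℤ :=
  if j ≤ i then (x : ℤ) - j + 1 else ((n : ℤ) - x) - ((d : ℤ) - j) + 1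

/-- `g_{n,d,i}` maps a `d`-subset `B = (b_1 < … < b_d)` to
`(f_{n,d,i,1}(b_1), …, f_{n,d,i,d}(b_d))`. -/
def gMap (n d i : ℕ) (B : Finset ℕ) : Fin d → ℤ :=
  fun k => fFun n d i ((k : ℕ) + 1) (nthElt B ((k : ℕ) + 1))

/-- A sparse composition of `p` of length `d+1`. -/
def IsSparseComposition (d p : ℕ) (c : Fin (d + 1) → ℕ) : Prop :=
  (∑ i, c i) = p ∧
  ∀ i : Fin (d + 1), 1 ≤ (i : ℕ) →
    c i = 0 ∨ c ⟨(i : ℕ) - 1, lt_of_le_of_lt (Nat.sub_le _ _) i.isLt⟩ = 0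

/-- The component `τ_i` of the `+`-component decomposition `Δ(τ)`:
the sign function whose `+`-set is `𝒞^τ_i`. -/
noncomputable def compFun (n d : ℕ) (τ : Finset ℕ → Bool) (i : ℕ) : Finset ℕ → Bool :=
  ofPlusSet (comp n d τ i)

/-- Keep the `i` smallest elements of `B` and shift the others by `ñ - n`
(this is `g⁻¹_{ñ,d,i} ∘ g_{n,d,i}` on `d`-subsets). -/
def gammaSet (n tn i : ℕ) (B : Finset ℕ) : Finset ℕ :=
  ((B.sort (· ≤ ·)).mapIdx fun k x => if k < i then x else x + tn - n).toFinset

/-- The map `h_{n,ñ,d,p,i}` on sign functions. -/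
noncomputable def hFun (n tn i : ℕ) (τ : Finset ℕ → Bool) : Finset ℕ → Bool :=
  ofPlusSet {A | ∃ B, τ B = true ∧ A = gammaSet n tn i B}

open Classical in
/-- `γ_{τ,ñ}(B)`: replace `b_j` by `b_j + ñ - n` whenever the `(τ,B,j)`-series is
right-aligned. -/
noncomputable def gammaFun (n tn : ℕ) (τ : Finset ℕ → Bool) (B : Finset ℕ) : Finset ℕ :=
  B.image fun x => if RightAligned (series n τ (B.erase x)) then x + tn - n else x

/-- The simple bijection `φ_{n,ñ,d,p}` on sign functions. -/
noncomputable def phiFun (n tn : ℕ) (τ : Finset ℕ → Bool) : Finset ℕ → Bool :=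
  ofPlusSet {A | ∃ B, τ B = true ∧ A = gammaFun n tn τ B}

/-! A signotope is determined by the family `T` of the complements of its `+`-subsets, which have
size `d = n - r`. For a `(d - 1)`-set `C`, the signotope condition says that the points `c` with
`C ∪ {c} ∈ T` form an initial segment of `[n] \ C` seen from one of the two ends of `[n]`.

If `T` has at most `p ≤ r = n - d` members, this end is canonical. Were both ends possible for the
same point of a `B ∈ T`, every `w ∉ B` could be exchanged into `B` inside `T`, and `T` would have
at least `n - d + 1` members. A similar count shows that, when a point of `B` is exchanged for
another one, every remaining point keeps its end. So each point of each `B ∈ T` has a label (end,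
distance from it), and the labelled family satisfies exchange axioms that do not mention `n`.
Reading the labels on `[n]` inverts this, as `p + d ≤ n` prevents points attached to opposite ends
from colliding. Both directions preserve inclusion and cardinality, which determine the single
steps. -/

open Finset

theorem signChanges_cons_cons (a b : Bool) (l : List Bool) :
    signChanges (a :: b :: l) = (if a = b then 0 else 1) + signChanges (b :: l) := by
  by_cases h : a = b <;> simp [signChanges, h, Nat.add_comm]

theorem signChanges_cons_eq_zero_iff (a : Bool) (l : List Bool) :
    signChanges (a :: l) = 0 ↔ ∀ b ∈ l, b = a := by
  induction l generalizing a with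
  | nil => simp [signChanges]
  | cons b l ih =>
    rw [signChanges_cons_cons]
    by_cases h : a = b
    · simp [h, ih]
    · simp [h, Ne.symm h]

theorem signChanges_le_one_iff (l : List Bool) :
    signChanges l ≤ 1 ↔ l.Pairwise (· ≤ ·) ∨ l.Pairwise (· ≥ ·) := by
  induction l with
  | nil => simp [signChanges]
  | cons a l ih =>
    cases l with
    | nil => simp [signChanges]
    | cons b l =>
      rw [signChanges_cons_cons]
      by_cases hab : a = b
      · subst hab
        simp_all
      · have hconst : (∀ x ∈ l, x = b) → l.Pairwise (· ≤ ·) ∧ l.Pairwise (· ≥ ·) := fun h ↦ by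
          rw [List.eq_replicate_of_mem h]
          simp [List.pairwise_replicate]
        have hone : (if a = b then 0 else 1) + signChanges (b :: l) ≤ 1 ↔
            signChanges (b :: l) = 0 := by simp [hab]
        rw [hone, signChanges_cons_eq_zero_iff]
        cases a <;> cases b <;> simp_all [Bool.le_iff_imp]

theorem pairwise_map_sort_iff {α β : Type*} [LinearOrder α] (R : β → β → Prop) (f : α → β)
    (X : Finset α) :
    ((X.sort (· ≤ ·)).map f).Pairwise R ↔ ∀ x ∈ X, ∀ y ∈ X, x < y → R (f x) (f y) := by
  have hsort := X.sortedLT_sort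
  rw [List.pairwise_map, List.pairwise_iff_getElem]
  simp only [← mem_sort (s := X) (· ≤ ·), List.mem_iff_getElem]
  constructor
  · rintro h _ ⟨i, hi, rfl⟩ _ ⟨j, hj, rfl⟩ hij
    exact h i j hi hj (hsort.getElem_lt_getElem_iff.1 hij)
  · exact fun h i j hi hj hij ↦
      h _ ⟨i, hi, rfl⟩ _ ⟨j, hj, rfl⟩ (hsort.getElem_lt_getElem_iff.2 hij)

theorem signChanges_map_sort_le_one_iff (X : Finset ℕ) (f : ℕ → Bool) :
    signChanges ((X.sort (· ≤ ·)).map f) ≤ 1 ↔ MonotoneOn f X ∨ AntitoneOn f X := by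
  rw [signChanges_le_one_iff, pairwise_map_sort_iff, pairwise_map_sort_iff,
    monotoneOn_iff_forall_lt, antitoneOn_iff_forall_lt]
  simp only [mem_coe, ge_iff_le]

section Counting

variable {α : Type*}

theorem card_le_card_of_mem_antisymm {W : Finset α} {U : Finset (Finset α)} (f : α → Finset α)
    (hfU : ∀ w ∈ W, f w ∈ U) (hmem : ∀ w ∈ W, w ∈ f w)
    (hanti : ∀ v ∈ W, ∀ w ∈ W, v ∈ f w → w ∈ f v → v = w) : #W ≤ #U :=
  card_le_card_of_injOn f hfU fun v hv w hw h ↦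
    hanti v hv w hw (h ▸ hmem v hv) (h.symm ▸ hmem w hw)

theorem card_lt_card_add_card_of_exchange [DecidableEq α] {U : Finset (Finset α)}
    {B : Finset α} (hB : B ∈ U) {W : Finset α}
    (h : ∀ w ∈ W, w ∉ B → ∃ b, insert w (B.erase b) ∈ U) : #W < #U + #B := by
  choose! b hb using h
  have hle : #(W \ B) ≤ #(U.erase B) := by
    refine card_le_card_of_mem_antisymm (fun w ↦ insert w (B.erase (b w))) ?_ (by simp) ?_
    · intro w hw
      rw [mem_sdiff] at hw
      exact mem_erase.2 ⟨fun he ↦ hw.2 (he ▸ mem_insert_self _ _), hb w hw.1 hw.2⟩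
    · simp only [mem_sdiff, mem_insert, mem_erase]
      tauto
  have hsplit : #W ≤ #(W \ B) + #B := card_le_card_sdiff_add_card
  have hpos := card_erase_add_one hB
  omega

end Counting

theorem image_erase_of_injOn {α β : Type*} [DecidableEq α] [DecidableEq β] {f : α → β}
    {s : Finset α} (hf : Set.InjOn f s) {a : α} (ha : a ∈ s) :
    (s.erase a).image f = (s.image f).erase (f a) := by
  rw [erase_eq, image_sdiff_of_injOn hf (singleton_subset_iff.2 ha), image_singleton, ← erase_eq]

/-- The point of `[n]` at distance `k` from an end of `[n]`, the left one (`0`) if `s = true` and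
the right one (`n + 1`) if `s = false`. For fixed `s` this is an involution of `[n]`, so it
also gives the distance of a point from the end `s`. -/
def fromEnd (n : ℕ) (s : Bool) (k : ℕ) : ℕ := if s then k else n + 1 - k

section fromEnd

variable {n v w : ℕ} {s : Bool}

theorem fromEnd_mem (hv : v ∈ Icc 1 n) : fromEnd n s v ∈ Icc 1 n := by
  grind [fromEnd]

theorem fromEnd_fromEnd (hv : v ∈ Icc 1 n) : fromEnd n s (fromEnd n s v) = v := by
  grind [fromEnd]

theorem fromEnd_false_lt_fromEnd_false_iff (hv : v ∈ Icc 1 n) :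
    fromEnd n false v < fromEnd n false w ↔ w < v := by
  grind [fromEnd]

theorem fromEnd_lt_or_lt_or_eq (hv : v ∈ Icc 1 n) (hw : w ∈ Icc 1 n) :
    fromEnd n s v < fromEnd n s w ∨ fromEnd n (!s) v < fromEnd n (!s) w ∨ v = w := by
  grind [fromEnd]

theorem fromEnd_injOn : Set.InjOn (fromEnd n s) (Icc 1 n : Finset ℕ) := fun v hv w hw h ↦ by
  rw [← fromEnd_fromEnd (s := s) hv, h, fromEnd_fromEnd hw]

end fromEnd

/-- All points of `[n] \ C` closer to the end `s` of `[n]` than `c` complete `C` to a member of `T`.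
If `T` is the set of `+`-subsets of a co-signotope, the part of the series of `C` between the end
`s` and `c` thus consists of `+` only. -/
def IsAligned (n : ℕ) (T : Finset (Finset ℕ)) (s : Bool) (C : Finset ℕ) (c : ℕ) : Prop :=
  ∀ w ∈ Icc 1 n, w ∉ C → fromEnd n s w < fromEnd n s c → insert w C ∈ T

/-- A choice, for every `C`, of an end of `[n]` such that the points `c` with `C ∪ {c} ∈ T` form
an initial segment of `[n] \ C` seen from that end. -/
def IsOrientation (n : ℕ) (T : Finset (Finset ℕ)) (side : Finset ℕ → Bool) : Prop :=
  ∀ C, ∀ c ∉ C, insert c C ∈ T → IsAligned n T (side C) C c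

theorem exists_isOrientation {n : ℕ} {T : Finset (Finset ℕ)}
    (h : ∀ C, ∀ c ∉ C, insert c C ∈ T →
      ∃ s, ∀ v ∉ C, insert v C ∈ T → IsAligned n T s C v) :
    ∃ side, IsOrientation n T side := by
  suffices hs : ∀ C, ∃ s, ∀ c ∉ C, insert c C ∈ T → IsAligned n T s C c from
    Classical.skolem.1 hs
  intro C
  by_cases hC : ∃ c ∉ C, insert c C ∈ T
  · obtain ⟨c, hc, hcC⟩ := hC
    exact h C c hc hcC
  · exact ⟨true, fun c hc hcC ↦ absurd ⟨c, hc, hcC⟩ hC⟩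

theorem IsAligned.mono {n : ℕ} {T T' : Finset (Finset ℕ)} (hTT' : T ⊆ T') {s : Bool}
    {C : Finset ℕ} {c : ℕ} (h : IsAligned n T s C c) : IsAligned n T' s C c :=
  fun w hw hwC hwc ↦ hTT' (h w hw hwC hwc)

section SmallFamily

variable {n d : ℕ} {T : Finset (Finset ℕ)} {s : Bool}

theorem fromEnd_lt_of_isAligned (hT : T ⊆ (Icc 1 n).powersetCard d) (hn : #T + d ≤ n)
    {B : Finset ℕ} (hB : B ∈ T) {b c : ℕ} (hc : c ∈ B)
    (hbs : IsAligned n T s (B.erase b) b) (hct : IsAligned n T (!s) (B.erase c) c) :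
    fromEnd n s b < fromEnd n s c := by
  obtain ⟨hBn, hBd⟩ := mem_powersetCard.1 (hT hB)
  by_contra! hcb
  have hcard : #(Icc 1 n) < #T + #B := by
    refine card_lt_card_add_card_of_exchange hB fun w hw hwB ↦ ?_
    rcases fromEnd_lt_or_lt_or_eq (s := s) hw (hBn hc) with h | h | rfl
    · exact ⟨b, hbs w hw (notMem_mono (erase_subset _ _) hwB) (h.trans_le hcb)⟩
    · exact ⟨c, hct w hw (notMem_mono (erase_subset _ _) hwB) h⟩
    · exact absurd hc hwB
  rw [Nat.card_Icc] at hcard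
  omega

theorem not_isAligned_not_of_isAligned (hT : T ⊆ (Icc 1 n).powersetCard d) (hn : #T + d ≤ n)
    {C : Finset ℕ} {x y c : ℕ} (hx : x ∉ C) (hxT : insert x C ∈ T) (hyT : insert y C ∈ T)
    (hc : c ∈ C) (hs : IsAligned n T s ((insert x C).erase c) c) :
    ¬ IsAligned n T (!s) ((insert y C).erase c) c := by
  intro hns
  obtain ⟨hxCn, hxCd⟩ := mem_powersetCard.1 (hT hxT)
  have hCn : C ⊆ Icc 1 n := (subset_insert _ _).trans hxCn
  rw [card_insert_of_notMem hx] at hxCd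
  -- The pairs `{w, π w} = f w \ (C \ {c})` are the edges of a spanning tree on `[n] \ (C \ {c})`
  -- rooted at `c`, with `π w` the parent of `w`.
  let f (w : ℕ) : Finset ℕ := if w = x ∨ w = y then insert w C else
    if fromEnd n s w < fromEnd n s c then insert w ((insert x C).erase c)
    else insert w ((insert y C).erase c)
  have hcard : #(Icc 1 n \ C) ≤ #T := by
    refine card_le_card_of_mem_antisymm f (fun w hw ↦ ?_) (fun w _ ↦ ?_) fun v hv w hw hvw hwv ↦ ?_
    · obtain ⟨hwn, hwC⟩ := mem_sdiff.1 hw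
      simp only [f]
      split_ifs with hwxy hwc
      · rcases hwxy with rfl | rfl <;> assumption
      · exact hs w hwn (by simp_all) hwc
      · refine hns w hwn (by simp_all) ?_
        grind [fromEnd_lt_or_lt_or_eq (s := s) hwn (hCn hc)]
    · simp only [f]
      split_ifs <;> exact mem_insert_self _ _
    · grind
  have hsdiff := card_sdiff_of_subset hCn
  rw [Nat.card_Icc] at hsdiff
  omega

end SmallFamily

/-- The point of `[n]` named by a label `(s, k)`, an end of `[n]` and a distance from it. -/
def labelPoint (n : ℕ) (e : Bool × ℕ) : ℕ := fromEnd n e.1 e.2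

/-- A family of `d`-sets of labels (end, distance from it) that can be read on `[n]` for every
large `n`; these are the common model of co-signotopes with few `+`-subsets for varying `n`. -/
structure IsStable (d : ℕ) (U : Finset (Finset (Bool × ℕ))) : Prop where
  card_eq : ∀ B ∈ U, #B = d
  pos : ∀ B ∈ U, ∀ e ∈ B, 1 ≤ e.2
  exchange : ∀ B ∈ U, ∀ s k j, (s, k) ∈ B → 1 ≤ j → j < k → (s, j) ∉ B →
    insert (s, j) (B.erase (s, k)) ∈ U
  side_eq : ∀ D, ∀ e ∉ D, ∀ f ∉ D, insert e D ∈ U → insert f D ∈ U → e.1 = f.1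

/-- The family of subsets of `[n]` described by a family of sets of labels. -/
def decode (n : ℕ) (U : Finset (Finset (Bool × ℕ))) : Finset (Finset ℕ) :=
  U.image (image (labelPoint n))

theorem image_labelPoint_mem_decode {n : ℕ} {U : Finset (Finset (Bool × ℕ))}
    {B : Finset (Bool × ℕ)} (hB : B ∈ U) : B.image (labelPoint n) ∈ decode n U :=
  mem_image_of_mem _ hB

theorem card_decode_le {n : ℕ} {U : Finset (Finset (Bool × ℕ))} : #(decode n U) ≤ #U :=
  card_image_le

namespace IsStable

variable {n d : ℕ} {U : Finset (Finset (Bool × ℕ))} {B : Finset (Bool × ℕ)}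

theorem card_lt_of_dominated (hU : IsStable d U) (hB : B ∈ U) {W : Finset (Bool × ℕ)}
    (hW : ∀ s j, (s, j) ∈ W → 1 ≤ j ∧ ∃ k, (s, k) ∈ B ∧ j ≤ k) : #W < #U + d := by
  rw [← hU.card_eq B hB]
  refine card_lt_card_add_card_of_exchange hB fun ⟨s, j⟩ hj hjB ↦ ?_
  obtain ⟨hj, k, hk, hjk⟩ := hW s j hj
  have hne : j ≠ k := fun h ↦ hjB (h ▸ hk)
  exact ⟨(s, k), hU.exchange B hB s k j hk hj (by omega) hjB⟩

theorem dist_lt (hU : IsStable d U) (hB : B ∈ U) {s : Bool} {k : ℕ} (hk : (s, k) ∈ B) :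
    k < #U + d := by
  have hcard := hU.card_lt_of_dominated hB (W := {s} ×ˢ Icc 1 k) fun t j hj ↦ by
    simp only [mem_product, mem_singleton, mem_Icc] at hj
    exact ⟨hj.2.1, k, hj.1 ▸ hk, hj.2.2⟩
  simpa using hcard

theorem dist_add_dist_lt (hU : IsStable d U) (hB : B ∈ U) {k l : ℕ} (hk : (true, k) ∈ B)
    (hl : (false, l) ∈ B) : k + l < #U + d := by
  have hcard := hU.card_lt_of_dominated hB
    (W := ({true} ×ˢ Icc 1 k) ∪ ({false} ×ˢ Icc 1 l)) fun t j hj ↦ by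
      simp only [mem_union, mem_product, mem_singleton, mem_Icc] at hj
      rcases hj with ⟨rfl, hj⟩ | ⟨rfl, hj⟩
      exacts [⟨hj.1, k, hk, hj.2⟩, ⟨hj.1, l, hl, hj.2⟩]
  have hdisj : Disjoint ({true} ×ˢ Icc 1 k) ({false} ×ˢ Icc 1 l) :=
    disjoint_product.2 (.inl (by simp))
  rw [card_union_of_disjoint hdisj] at hcard
  simpa using hcard

theorem dist_mem (hU : IsStable d U) (hn : #U + d ≤ n) (hB : B ∈ U) {e : Bool × ℕ}
    (he : e ∈ B) : e.2 ∈ Icc 1 n :=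
  mem_Icc.2 ⟨hU.pos B hB e he, ((hU.dist_lt hB he).trans_le hn).le⟩

theorem labelPoint_mem (hU : IsStable d U) (hn : #U + d ≤ n) (hB : B ∈ U) {e : Bool × ℕ}
    (he : e ∈ B) : labelPoint n e ∈ Icc 1 n :=
  fromEnd_mem (hU.dist_mem hn hB he)

theorem labelPoint_injOn (hU : IsStable d U) (hn : #U + d ≤ n) (hB : B ∈ U) :
    Set.InjOn (labelPoint n) B := by
  have hne {k l : ℕ} (hk : (true, k) ∈ B) (hl : (false, l) ∈ B) :
      labelPoint n (true, k) ≠ labelPoint n (false, l) := by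
    have hkl := hU.dist_add_dist_lt hB hk hl
    simp only [labelPoint, fromEnd, if_true, Bool.false_eq_true, if_false]
    omega
  rintro ⟨s, k⟩ hk ⟨t, l⟩ hl h
  rcases s.eq_or_eq_not t with rfl | rfl
  · exact Prod.ext rfl (fromEnd_injOn (hU.dist_mem hn hB hk) (hU.dist_mem hn hB hl) h)
  · cases t
    · exact absurd h (hne hk hl)
    · exact absurd h.symm (hne hl hk)

theorem decode_subset_powersetCard (hU : IsStable d U) (hn : #U + d ≤ n) :
    decode n U ⊆ (Icc 1 n).powersetCard d := by
  refine image_subset_iff.2 fun B hB ↦ mem_powersetCard.2 ⟨?_, ?_⟩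
  · exact image_subset_iff.2 fun e he ↦ hU.labelPoint_mem hn hB he
  · rw [card_image_of_injOn (hU.labelPoint_injOn hn hB), hU.card_eq B hB]

theorem isAligned_decode (hU : IsStable d U) (hn : #U + d ≤ n) (hB : B ∈ U) {e : Bool × ℕ}
    (he : e ∈ B) : IsAligned n (decode n U) e.1 ((B.image (labelPoint n)).erase (labelPoint n e))
      (labelPoint n e) := by
  obtain ⟨s, k⟩ := e
  intro w hw hwB hwk
  have hw_point : labelPoint n (s, fromEnd n s w) = w := fromEnd_fromEnd hw
  have hlt : fromEnd n s w < k := by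
    rwa [labelPoint, fromEnd_fromEnd (hU.dist_mem hn hB he)] at hwk
  have hnot : (s, fromEnd n s w) ∉ B := fun h ↦ by
    refine hwB (mem_erase.2 ⟨fun heq ↦ hwk.ne (by rw [heq]), ?_⟩)
    exact mem_image.2 ⟨_, h, hw_point⟩
  have hmem := image_labelPoint_mem_decode (n := n)
    (hU.exchange B hB s k _ he (mem_Icc.1 (fromEnd_mem hw)).1 hlt hnot)
  rwa [image_insert, image_erase_of_injOn (hU.labelPoint_injOn hn hB) he, hw_point] at hmem

theorem subset_of_image_labelPoint_eq {U' : Finset (Finset (Bool × ℕ))} (hU : IsStable d U)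
    (hU' : IsStable d U') (hn : #U + d ≤ n) (hn' : #U' + d ≤ n) (hsub : decode n U ⊆ decode n U')
    {B' : Finset (Bool × ℕ)} (hB : B ∈ U) (hB' : B' ∈ U')
    (h : B.image (labelPoint n) = B'.image (labelPoint n)) : B ⊆ B' := by
  rintro ⟨s, k⟩ hk
  obtain ⟨⟨t, l⟩, hl, hkl⟩ := mem_image.1 (h ▸ mem_image_of_mem (labelPoint n) hk)
  rcases t.eq_or_eq_not s with rfl | rfl
  · obtain rfl : l = k := fromEnd_injOn (hU'.dist_mem hn' hB' hl) (hU.dist_mem hn hB hk) hkl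
    exact hl
  · have hs := (hU.isAligned_decode hn hB hk).mono hsub
    have hns := hU'.isAligned_decode hn' hB' hl
    rw [hkl, ← h] at hns
    exact absurd (fromEnd_lt_of_isAligned (hU'.decode_subset_powersetCard hn')
      ((Nat.add_le_add_right card_decode_le d).trans hn')
      (hsub (image_labelPoint_mem_decode hB)) (mem_image_of_mem _ hk) hs hns) (lt_irrefl _)

theorem eq_of_image_labelPoint_eq {U' : Finset (Finset (Bool × ℕ))} (hU : IsStable d U)
    (hU' : IsStable d U') (hn : #U + d ≤ n) (hn' : #U' + d ≤ n) (hsub : decode n U ⊆ decode n U')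
    {B' : Finset (Bool × ℕ)} (hB : B ∈ U) (hB' : B' ∈ U')
    (h : B.image (labelPoint n) = B'.image (labelPoint n)) : B = B' :=
  eq_of_subset_of_card_le (hU.subset_of_image_labelPoint_eq hU' hn hn' hsub hB hB' h)
    (by rw [hU.card_eq B hB, hU'.card_eq B' hB'])

theorem decode_subset_decode_iff {U' : Finset (Finset (Bool × ℕ))} (hU : IsStable d U)
    (hU' : IsStable d U') (hn : #U + d ≤ n) (hn' : #U' + d ≤ n) :
    decode n U ⊆ decode n U' ↔ U ⊆ U' := by
  refine ⟨fun hsub B hB ↦ ?_, image_subset_image⟩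
  obtain ⟨B', hB', h⟩ := mem_image.1 (hsub (image_labelPoint_mem_decode hB))
  rwa [hU.eq_of_image_labelPoint_eq hU' hn hn' hsub hB hB' h.symm]

theorem card_decode (hU : IsStable d U) (hn : #U + d ≤ n) : #(decode n U) = #U :=
  card_image_of_injOn fun _ hB _ hB' h ↦
    hU.eq_of_image_labelPoint_eq hU hn hn Subset.rfl hB hB' h

theorem exists_erase_image_eq (hU : IsStable d U) (hn : #U + d ≤ n) {C : Finset ℕ} {c : ℕ}
    (hc : c ∉ C) (hcC : insert c C ∈ decode n U) :
    ∃ B ∈ U, ∃ e ∈ B, labelPoint n e = c ∧ (B.erase e).image (labelPoint n) = C := by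
  obtain ⟨B, hB, hBC⟩ := mem_image.1 hcC
  obtain ⟨e, he, rfl⟩ := mem_image.1 (hBC ▸ mem_insert_self c C)
  refine ⟨B, hB, e, he, rfl, ?_⟩
  rw [image_erase_of_injOn (hU.labelPoint_injOn hn hB) he, hBC, erase_insert hc]

theorem erase_subset_erase_of_image_eq (hU : IsStable d U) (hn : #U + d ≤ n)
    {B' : Finset (Bool × ℕ)} (hB : B ∈ U) (hB' : B' ∈ U) {e f : Bool × ℕ} (he : e ∈ B)
    (hf : f ∈ B')
    (h : (B.erase e).image (labelPoint n) = (B'.erase f).image (labelPoint n)) :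
    B.erase e ⊆ B'.erase f := by
  rintro ⟨s, k⟩ hk
  obtain ⟨⟨t, l⟩, hl, hkl⟩ := mem_image.1 (h ▸ mem_image_of_mem (labelPoint n) hk)
  have hkB := mem_of_mem_erase hk
  have hlB' := mem_of_mem_erase hl
  rcases t.eq_or_eq_not s with rfl | rfl
  · obtain rfl : l = k := fromEnd_injOn (hU.dist_mem hn hB' hlB') (hU.dist_mem hn hB hkB) hkl
    exact hl
  · set C := (B.erase e).image (labelPoint n) with hC
    have heC : labelPoint n e ∉ C := by
      rw [hC, image_erase_of_injOn (hU.labelPoint_injOn hn hB) he]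
      exact notMem_erase _ _
    have hB_eq : B.image (labelPoint n) = insert (labelPoint n e) C := by
      rw [hC, ← image_insert, insert_erase he]
    have hB'_eq : B'.image (labelPoint n) = insert (labelPoint n f) C := by
      rw [h, ← image_insert, insert_erase hf]
    have hs := hU.isAligned_decode hn hB hkB
    have hns := hU.isAligned_decode hn hB' hlB'
    rw [hB_eq] at hs
    rw [hB'_eq, hkl] at hns
    exact absurd hns (not_isAligned_not_of_isAligned (hU.decode_subset_powersetCard hn)
      ((Nat.add_le_add_right card_decode_le d).trans hn) heC
      (hB_eq ▸ image_labelPoint_mem_decode hB) (hB'_eq ▸ image_labelPoint_mem_decode hB')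
      (mem_image_of_mem _ hk) hs)

theorem exists_isOrientation_decode (hU : IsStable d U) (hn : #U + d ≤ n) :
    ∃ side, IsOrientation n (decode n U) side := by
  refine exists_isOrientation fun C c hc hcC ↦ ?_
  obtain ⟨B, hB, e, he, -, hBC⟩ := hU.exists_erase_image_eq hn hc hcC
  refine ⟨e.1, fun v hv hvC ↦ ?_⟩
  obtain ⟨B', hB', f, hf, rfl, hB'C⟩ := hU.exists_erase_image_eq hn hv hvC
  have heq : B.erase e = B'.erase f :=
    (hU.erase_subset_erase_of_image_eq hn hB hB' he hf (hBC.trans hB'C.symm)).antisymm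
      (hU.erase_subset_erase_of_image_eq hn hB' hB hf he (hB'C.trans hBC.symm))
  have hside : e.1 = f.1 := hU.side_eq (B.erase e) e (notMem_erase _ _) f
    (heq ▸ notMem_erase _ _) (by rwa [insert_erase he]) (by rwa [heq, insert_erase hf])
  have hal := hU.isAligned_decode hn hB' hf
  rwa [← image_erase_of_injOn (hU.labelPoint_injOn hn hB') hf, hB'C, ← hside] at hal

end IsStable

/-- The label of the point `c` of the `+`-subset `B`: the end of `[n]` chosen by `side` for the
series of `B \ {c}`, and the distance of `c` from it. -/
def label (n : ℕ) (side : Finset ℕ → Bool) (B : Finset ℕ) (c : ℕ) : Bool × ℕ :=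
  (side (B.erase c), fromEnd n (side (B.erase c)) c)

/-- The family of sets of labels describing a family of subsets of `[n]` with orientation `side`. -/
def encode (n : ℕ) (side : Finset ℕ → Bool) (T : Finset (Finset ℕ)) :
    Finset (Finset (Bool × ℕ)) :=
  T.image fun B ↦ B.image (label n side B)

section encode

variable {n d : ℕ} {T : Finset (Finset ℕ)} {side : Finset ℕ → Bool} {B C : Finset ℕ}

theorem labelPoint_label {c : ℕ} (hc : c ∈ Icc 1 n) : labelPoint n (label n side B c) = c :=
  fromEnd_fromEnd hc

theorem label_injOn (hC : C ⊆ Icc 1 n) : Set.InjOn (label n side B) C :=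
  Set.LeftInvOn.injOn (f₁' := labelPoint n) fun _ hc ↦ labelPoint_label (hC hc)

theorem image_labelPoint_image_label (hC : C ⊆ Icc 1 n) :
    (C.image (label n side B)).image (labelPoint n) = C := by
  rw [image_image]
  exact (image_congr fun c hc ↦ labelPoint_label (hC hc)).trans image_id

theorem decode_encode (hT : T ⊆ (Icc 1 n).powersetCard d) : decode n (encode n side T) = T := by
  rw [decode, encode, image_image]
  refine (image_congr fun B hB ↦ ?_).trans image_id
  exact image_labelPoint_image_label (mem_powersetCard.1 (hT hB)).1

theorem card_encode_le : #(encode n side T) ≤ #T := card_image_le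

theorem fst_eq_of_insert_mem_encode (hT : T ⊆ (Icc 1 n).powersetCard d)
    {D : Finset (Bool × ℕ)} {e : Bool × ℕ} (he : e ∉ D) (heD : insert e D ∈ encode n side T) :
    e.1 = side (D.image (labelPoint n)) := by
  obtain ⟨B, hB, hBD⟩ := mem_image.1 heD
  obtain ⟨c, hc, rfl⟩ := mem_image.1 (hBD ▸ mem_insert_self e D)
  have hBn : B ⊆ Icc 1 n := (mem_powersetCard.1 (hT hB)).1
  rw [← erase_insert he, ← hBD, ← image_erase_of_injOn (label_injOn hBn) hc,
    image_labelPoint_image_label ((erase_subset _ _).trans hBn), label]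

namespace IsOrientation

theorem isAligned_erase (hside : IsOrientation n T side) (hB : B ∈ T) {c : ℕ} (hc : c ∈ B) :
    IsAligned n T (side (B.erase c)) (B.erase c) c :=
  hside _ c (notMem_erase _ _) (by rwa [insert_erase hc])

theorem label_insert_eq (hside : IsOrientation n T side) (hT : T ⊆ (Icc 1 n).powersetCard d)
    (hn : #T + d ≤ n) {x y c : ℕ} (hx : x ∉ C) (hxT : insert x C ∈ T) (hyT : insert y C ∈ T)
    (hc : c ∈ C) : label n side (insert x C) c = label n side (insert y C) c := by
  have hs := hside.isAligned_erase hxT (mem_insert_of_mem hc)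
  have ht := hside.isAligned_erase hyT (mem_insert_of_mem hc)
  have heq : side ((insert x C).erase c) = side ((insert y C).erase c) := by
    by_contra hne
    rw [Bool.eq_not.2 (Ne.symm hne)] at ht
    exact not_isAligned_not_of_isAligned hT hn hx hxT hyT hc hs ht
  rw [label, label, heq]

theorem exchange (hside : IsOrientation n T side) (hT : T ⊆ (Icc 1 n).powersetCard d)
    (hn : #T + d ≤ n) (hB : B ∈ T) {c j : ℕ} (hc : c ∈ B) (hj : 1 ≤ j)
    (hjc : j < fromEnd n (side (B.erase c)) c)
    (hjB : (side (B.erase c), j) ∉ B.image (label n side B)) :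
    fromEnd n (side (B.erase c)) j ∉ B ∧
      insert (fromEnd n (side (B.erase c)) j) (B.erase c) ∈ T := by
  have hBn : B ⊆ Icc 1 n := (mem_powersetCard.1 (hT hB)).1
  have hal := hside.isAligned_erase hB hc
  set s := side (B.erase c)
  have hjn : j ∈ Icc 1 n :=
    mem_Icc.2 ⟨hj, hjc.le.trans (mem_Icc.1 (fromEnd_mem (hBn hc))).2⟩
  have hwB : fromEnd n s j ∉ B := fun hw ↦ by
    have hal' := hside.isAligned_erase hB hw
    rcases (side (B.erase (fromEnd n s j))).eq_or_eq_not s with h | h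
    · refine hjB (mem_image.2 ⟨_, hw, ?_⟩)
      rw [label, h, fromEnd_fromEnd hjn]
    · have hlt := fromEnd_lt_of_isAligned hT hn hB hw hal (h ▸ hal')
      rw [fromEnd_fromEnd hjn] at hlt
      exact hlt.not_gt hjc
  exact ⟨hwB, hal _ (fromEnd_mem hjn) (notMem_mono (erase_subset _ _) hwB)
    (by rwa [fromEnd_fromEnd hjn])⟩

theorem isStable_encode (hside : IsOrientation n T side) (hT : T ⊆ (Icc 1 n).powersetCard d)
    (hn : #T + d ≤ n) : IsStable d (encode n side T) where
  card_eq := forall_mem_image.2 fun B hB ↦ by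
    obtain ⟨hBn, hBd⟩ := mem_powersetCard.1 (hT hB)
    rw [card_image_of_injOn (label_injOn hBn), hBd]
  pos := forall_mem_image.2 fun B hB ↦ forall_mem_image.2 fun c hc ↦
    (mem_Icc.1 (fromEnd_mem ((mem_powersetCard.1 (hT hB)).1 hc))).1
  exchange := forall_mem_image.2 fun B hB s k j hk hj hjk hjB ↦ by
    obtain ⟨c, hc, hck⟩ := mem_image.1 hk
    obtain ⟨rfl, rfl⟩ := Prod.ext_iff.1 hck
    have hBn : B ⊆ Icc 1 n := (mem_powersetCard.1 (hT hB)).1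
    obtain ⟨hwB, hwT⟩ := hside.exchange hT hn hB hc hj hjk hjB
    have hjn : j ∈ Icc 1 n := mem_Icc.2 ⟨hj, hjk.le.trans (mem_Icc.1 (fromEnd_mem (hBn hc))).2⟩
    refine mem_image.2 ⟨_, hwT, ?_⟩
    rw [image_insert, ← hck, ← image_erase_of_injOn (label_injOn hBn) hc]
    congr 1
    · rw [label, erase_insert (notMem_mono (erase_subset _ _) hwB), fromEnd_fromEnd hjn]
      rfl
    · refine image_congr fun b hb ↦ ?_
      have := hside.label_insert_eq hT hn (notMem_mono (erase_subset _ _) hwB) hwT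
        (by rwa [insert_erase hc]) hb
      rwa [insert_erase hc] at this
  side_eq D e he f hf heD hfD :=
    (fst_eq_of_insert_mem_encode hT he heD).trans (fst_eq_of_insert_mem_encode hT hf hfD).symm

end IsOrientation

end encode

/-- The sign function on subsets of `[n]` whose `+`-sets are the complements of the members of
`T`. Co-signotopes are thereby encoded by the families `T` of their `+`-subsets. -/
noncomputable def complSign (n : ℕ) (T : Finset (Finset ℕ)) : Finset ℕ → Bool :=
  ofPlusSet {A | A ⊆ Icc 1 n ∧ Icc 1 n \ A ∈ T}

section complSign

variable {n r d : ℕ} {T T' : Finset (Finset ℕ)} {A C : Finset ℕ}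

theorem complSign_eq_true_iff : complSign n T A = true ↔ A ⊆ Icc 1 n ∧ Icc 1 n \ A ∈ T := by
  simp [complSign, ofPlusSet]

theorem complSign_sdiff_eq_true_iff (hC : C ⊆ Icc 1 n) :
    complSign n T (Icc 1 n \ C) = true ↔ C ∈ T := by
  rw [complSign_eq_true_iff, Finset.sdiff_sdiff_eq_self hC, and_iff_right sdiff_subset]

theorem complSign_le_iff (hT : T ⊆ (Icc 1 n).powersetCard d) :
    complSign n T ≤ complSign n T' ↔ T ⊆ T' := by
  simp only [Pi.le_def, Bool.le_iff_imp]
  refine ⟨fun h B hB ↦ ?_, fun h A hA ↦ ?_⟩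
  · have hBn := (mem_powersetCard.1 (hT hB)).1
    exact (complSign_sdiff_eq_true_iff hBn).1 (h _ ((complSign_sdiff_eq_true_iff hBn).2 hB))
  · rw [complSign_eq_true_iff] at hA ⊢
    exact ⟨hA.1, h hA.2⟩

theorem plusCount_complSign (hT : T ⊆ (Icc 1 n).powersetCard d) :
    plusCount (complSign n T) = #T := by
  have hTn {B : Finset ℕ} (hB : B ∈ T) : Icc 1 n \ (Icc 1 n \ B) = B :=
    Finset.sdiff_sdiff_eq_self (mem_powersetCard.1 (hT hB)).1
  have himage : {A | complSign n T A = true} = (Icc 1 n \ ·) '' (T : Set (Finset ℕ)) := by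
    ext A
    rw [Set.mem_ofPred_eq, complSign_eq_true_iff]
    constructor
    · exact fun ⟨hA, hAT⟩ ↦ ⟨_, hAT, Finset.sdiff_sdiff_eq_self hA⟩
    · rintro ⟨B, hB, rfl⟩
      exact ⟨sdiff_subset, by rwa [hTn hB]⟩
  have hinj : Set.InjOn (Icc 1 n \ ·) (T : Set (Finset ℕ)) :=
    Set.LeftInvOn.injOn (f₁' := (Icc 1 n \ ·)) fun _ hB ↦ hTn hB
  rw [plusCount, himage, hinj.ncard_image, Set.ncard_coe_finset]

theorem exists_complSign_eq (hn : n = r + d) {σ : Finset ℕ → Bool}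
    (hσ : ∀ A, σ A = true → A ⊆ Icc 1 n ∧ #A = r) :
    ∃ T ⊆ (Icc 1 n).powersetCard d, complSign n T = σ := by
  refine ⟨{B ∈ (Icc 1 n).powersetCard d | σ (Icc 1 n \ B)}, filter_subset _ _, funext fun A ↦ ?_⟩
  rw [Bool.eq_iff_iff, complSign_eq_true_iff, mem_filter, mem_powersetCard]
  refine ⟨fun ⟨hA, _, h⟩ ↦ by rwa [Finset.sdiff_sdiff_eq_self hA] at h, fun h ↦ ?_⟩
  obtain ⟨hA, hAr⟩ := hσ A h
  refine ⟨hA, ⟨sdiff_subset, ?_⟩, by rwa [Finset.sdiff_sdiff_eq_self hA]⟩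
  rw [card_sdiff_of_subset hA, Nat.card_Icc]
  omega

theorem complSign_erase_eq_true_iff (hC : C ⊆ Icc 1 n) {x : ℕ} (hx : x ∈ Icc 1 n \ C) :
    complSign n T ((Icc 1 n \ C).erase x) = true ↔ insert x C ∈ T := by
  rw [← sdiff_insert,
    complSign_sdiff_eq_true_iff (insert_subset (mem_sdiff.1 hx).1 hC)]

theorem antitoneOn_complSign_erase_iff (hC : C ⊆ Icc 1 n) :
    AntitoneOn (fun x ↦ complSign n T ((Icc 1 n \ C).erase x)) (Icc 1 n \ C : Finset ℕ) ↔
      ∀ c ∈ Icc 1 n \ C, insert c C ∈ T → IsAligned n T true C c := by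
  have hsign {x : ℕ} (hx : x ∈ Icc 1 n \ C) := complSign_erase_eq_true_iff (T := T) hC hx
  rw [antitoneOn_iff_forall_lt]
  constructor
  · intro h c hc hcT w hw hwC hwc
    have hw' := mem_sdiff.2 ⟨hw, hwC⟩
    exact (hsign hw').1 (Bool.le_iff_imp.1 (h hw' hc hwc) ((hsign hc).2 hcT))
  · intro h w hw c hc hwc
    obtain ⟨hwn, hwC⟩ := mem_sdiff.1 hw
    exact Bool.le_iff_imp.2 fun hcT ↦ (hsign hw).2 (h c hc ((hsign hc).1 hcT) w hwn hwC hwc)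

theorem monotoneOn_complSign_erase_iff (hC : C ⊆ Icc 1 n) :
    MonotoneOn (fun x ↦ complSign n T ((Icc 1 n \ C).erase x)) (Icc 1 n \ C : Finset ℕ) ↔
      ∀ c ∈ Icc 1 n \ C, insert c C ∈ T → IsAligned n T false C c := by
  have hsign {x : ℕ} (hx : x ∈ Icc 1 n \ C) := complSign_erase_eq_true_iff (T := T) hC hx
  rw [monotoneOn_iff_forall_lt]
  constructor
  · intro h c hc hcT w hw hwC hwc
    have hw' := mem_sdiff.2 ⟨hw, hwC⟩
    rw [fromEnd_false_lt_fromEnd_false_iff hw] at hwc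
    exact (hsign hw').1 (Bool.le_iff_imp.1 (h hc hw' hwc) ((hsign hc).2 hcT))
  · intro h c hc w hw hcw
    obtain ⟨hwn, hwC⟩ := mem_sdiff.1 hw
    rw [← fromEnd_false_lt_fromEnd_false_iff hwn] at hcw
    exact Bool.le_iff_imp.2 fun hcT ↦ (hsign hw).2 (h c hc ((hsign hc).1 hcT) w hwn hwC hcw)

theorem signChanges_complSign_le_one_iff (hC : C ⊆ Icc 1 n) :
    signChanges (((Icc 1 n \ C).sort (· ≤ ·)).map
        fun x ↦ complSign n T ((Icc 1 n \ C).erase x)) ≤ 1 ↔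
      ∃ s, ∀ c ∈ Icc 1 n \ C, insert c C ∈ T → IsAligned n T s C c := by
  rw [signChanges_map_sort_le_one_iff, antitoneOn_complSign_erase_iff hC,
    monotoneOn_complSign_erase_iff hC, Bool.exists_bool]

theorem isSignotope_complSign_iff (hT : T ⊆ (Icc 1 n).powersetCard d) (hn : n = r + d) :
    IsSignotope n r (complSign n T) ↔ ∃ side, IsOrientation n T side := by
  constructor
  · rintro ⟨-, hσ⟩
    refine exists_isOrientation fun C c hc hcC ↦ ?_
    obtain ⟨hcn, hcd⟩ := mem_powersetCard.1 (hT hcC)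
    have hCn : C ⊆ Icc 1 n := (subset_insert _ _).trans hcn
    rw [card_insert_of_notMem hc] at hcd
    have hcard : #(Icc 1 n \ C) = r + 1 := by
      rw [card_sdiff_of_subset hCn, Nat.card_Icc]
      omega
    obtain ⟨s, hs⟩ := (signChanges_complSign_le_one_iff hCn).1 (hσ _ sdiff_subset hcard)
    refine ⟨s, fun v hv hvC ↦ hs v (mem_sdiff.2 ⟨?_, hv⟩) hvC⟩
    exact (mem_powersetCard.1 (hT hvC)).1 (mem_insert_self _ _)
  · rintro ⟨side, hside⟩
    refine ⟨fun A hA ↦ ?_, fun X hX _ ↦ ?_⟩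
    · obtain ⟨hAn, hAT⟩ := complSign_eq_true_iff.1 hA
      have hcard := (mem_powersetCard.1 (hT hAT)).2
      have hle := card_le_card hAn
      rw [card_sdiff_of_subset hAn] at hcard
      rw [Nat.card_Icc] at hcard hle
      exact ⟨hAn, by omega⟩
    · rw [← Finset.sdiff_sdiff_eq_self hX, signChanges_complSign_le_one_iff sdiff_subset]
      exact ⟨_, fun c hc ↦ hside _ c (mem_sdiff.1 hc).2⟩

end complSign

theorem complSign_decode_mem_sigSetLe {n r d p : ℕ} (hn : n = r + d) (hp : p ≤ r)
    {U : Finset (Finset (Bool × ℕ))} (hU : IsStable d U) (hUp : #U ≤ p) :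
    complSign n (decode n U) ∈ sigSetLe n r p := by
  have hUn : #U + d ≤ n := by omega
  have hT := hU.decode_subset_powersetCard hUn
  refine ⟨(isSignotope_complSign_iff hT hn).2 (hU.exists_isOrientation_decode hUn), ?_⟩
  rw [plusCount_complSign hT, hU.card_decode hUn]
  exact hUp

theorem exists_isStable_complSign_decode_eq {n r d p : ℕ} (hn : n = r + d) (hp : p ≤ r)
    {σ : Finset ℕ → Bool} (hσ : σ ∈ sigSetLe n r p) :
    ∃ U, IsStable d U ∧ #U ≤ p ∧ complSign n (decode n U) = σ := by
  obtain ⟨hsig, hcount⟩ := hσ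
  obtain ⟨T, hT, rfl⟩ := exists_complSign_eq hn hsig.1
  obtain ⟨side, hside⟩ := (isSignotope_complSign_iff hT hn).1 hsig
  rw [plusCount_complSign hT] at hcount
  exact ⟨encode n side T, hside.isStable_encode hT (by omega), card_encode_le.trans hcount,
    by rw [decode_encode hT]⟩

/-- The stable families of size at most `p` as a model of `𝒮_{≤p}(n, r)` that depends only on
`d = n - r` and `p`. Sign functions carry the pointwise order, that is inclusion of `+`-sets. -/
noncomputable def stableOrderIso {n r d p : ℕ} (hn : n = r + d) (hp : p ≤ r) :
    {U // IsStable d U ∧ #U ≤ p} ≃o sigSetLe n r p :=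
  OrderIso.ofSurjective
    (OrderEmbedding.ofMapLEIff
      (fun U ↦ ⟨complSign n (decode n U), complSign_decode_mem_sigSetLe hn hp U.2.1 U.2.2⟩)
      fun {U U'} ↦ by
        obtain ⟨U, hU, hUp⟩ := U
        obtain ⟨U', hU', hUp'⟩ := U'
        have hUn : #U + d ≤ n := by omega
        have hUn' : #U' + d ≤ n := by omega
        exact (complSign_le_iff (hU.decode_subset_powersetCard hUn)).trans
          (hU.decode_subset_decode_iff hU' hUn hUn'))
    fun ⟨_, hσ⟩ ↦
      let ⟨U, hU, hUp, hUσ⟩ := exists_isStable_complSign_decode_eq hn hp hσ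
      ⟨⟨U, hU, hUp⟩, Subtype.ext hUσ⟩

theorem plusCount_stableOrderIso {n r d p : ℕ} (hn : n = r + d) (hp : p ≤ r)
    (U : {U // IsStable d U ∧ #U ≤ p}) : plusCount (stableOrderIso hn hp U).1 = #U.1 := by
  obtain ⟨U, hU, hUp⟩ := U
  have hUn : #U + d ≤ n := by omega
  exact (plusCount_complSign (hU.decode_subset_powersetCard hUn)).trans (hU.card_decode hUn)

theorem singleStep_iff {σ τ : Finset ℕ → Bool} :
    SingleStep σ τ ↔ σ < τ ∧ plusCount τ = plusCount σ + 1 := by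
  rw [SingleStep, lt_iff_le_not_ge, lt_iff_le_not_ge]
  simp only [Pi.le_def, Bool.le_iff_imp, Set.ofPred_subset_ofPred]

theorem BruhatLe.map {n r n' r' p : ℕ} {f : sigSetLe n r p → sigSetLe n' r' p}
    (hf : StrictMono f) (hcount : ∀ σ, plusCount (f σ).1 = plusCount σ.1)
    {σ τ : sigSetLe n r p} (h : BruhatLe n r σ τ) : BruhatLe n' r' (f σ) (f τ) := by
  obtain ⟨τ, hτ⟩ := τ
  change BruhatLe n r σ τ at h
  induction h with
  | refl => exact .refl
  | @tail ρ τ _ hstep ih =>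
    obtain ⟨hρsig, -, hρτ⟩ := hstep
    obtain ⟨hlt, hadd⟩ := singleStep_iff.1 hρτ
    -- Steps only add `+`-sets, so a chain that ends in `𝒮_{≤p}(n, r)` stays in it.
    have hρ : ρ ∈ sigSetLe n r p := ⟨hρsig, (hadd.ge.trans' (Nat.le_succ _)).trans hτ.2⟩
    refine (ih hρ).tail ⟨(f _).2.1, (f _).2.1, singleStep_iff.2 ⟨?_, ?_⟩⟩
    · exact hf (a := ⟨ρ, hρ⟩) (b := ⟨τ, hτ⟩) hlt
    · rw [hcount, hcount, hadd]

/-- **Theorem (main bijection, signotope form).** If `n - r = ñ - r̃ = d` and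
`p ≤ min {r, r̃}`, then there is a bijection between `𝒮_{≤p}(n,r)` and `𝒮_{≤p}(ñ,r̃)`
preserving the higher Bruhat order. -/
theorem statement0 (n tn r tr d p : ℕ) (hr : 1 ≤ r) (htr : 1 ≤ tr)
    (hn : n = r + d) (htn : tn = tr + d) (hp : p ≤ min r tr) :
    ∃ Φ : ↥(sigSetLe n r p) ≃ ↥(sigSetLe tn tr p),
      ∀ σ σ' : ↥(sigSetLe n r p),
        BruhatLe n r σ.1 σ'.1 ↔ BruhatLe tn tr (Φ σ).1 (Φ σ').1 := by
  let e := stableOrderIso hn (hp.trans (min_le_left r tr))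
  let e' := stableOrderIso htn (hp.trans (min_le_right r tr))
  let Φ : sigSetLe n r p ≃o sigSetLe tn tr p := e.symm.trans e'
  have hcount (σ) : plusCount (Φ σ).1 = plusCount σ.1 := by
    obtain ⟨U, rfl⟩ := e.surjective σ
    simp only [Φ, e, e', OrderIso.trans_apply, OrderIso.symm_apply_apply, plusCount_stableOrderIso]
  have hcount_symm (σ) : plusCount (Φ.symm σ).1 = plusCount σ.1 := by
    rw [← hcount, Φ.apply_symm_apply]
  refine ⟨Φ.toEquiv, fun σ σ' ↦ ⟨fun h ↦ h.map Φ.strictMono hcount, fun h ↦ ?_⟩⟩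
  have h_symm := BruhatLe.map Φ.symm.strictMono hcount_symm h
  rwa [Φ.coe_toEquiv, Φ.symm_apply_apply, Φ.symm_apply_apply] at h_symm
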